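/- arXiv:2205.10662 — 4 statements merged into one kernel-verified Lean document; each statement's English description precedes it below -/
import Mathlib

section
/- (Lemma 2: gauge equivariance of the Equivariant Mesh Attention update.) Let C_in, C_att, C_out be positive integers and let ρ_in, ρ_att, ρ_out be orthogonal representations of SO(2) on ℝ^{C_in}, ℝ^{C_att}, ℝ^{C_out} respectively. Let K_query be a C_att × C_in real matrix and let K_key : ℝ → M_{C_att × C_in}(ℝ) and K_value : ℝ → M_{C_out × C_in}(ℝ) satisfy, for all θ, g ∈ ℝ: K_query = ρ_att(−g) K_query ρ_in(g), K_key(θ − g) = ρ_att(−g) K_key(θ) ρ_in(g), and K_value(θ − g) = ρ_out(−g) K_value(θ) ρ_in(g). For an integer N ≥ 1, angles θ_q, g_q ∈ ℝ and vectors f_q ∈ ℝ^{C_in} for q = 1, …, N, and f_p ∈ ℝ^{C_in}, define the attention update F(f_p; (θ_q, g_q, f_q)_q) := N · Σ_q α_q · K_value(θ_q) ρ_in(g_q) f_q, where α_q := softmax over q of ⟨K_key(θ_q) ρ_in(g_q) f_q, K_query f_p⟩ / √C_att. Then for all gauge changes h_p ∈ ℝ at p and h_q ∈ ℝ at each neighbor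 q: F( ρ_in(−h_p) f_p; (θ_q − h_p, g_q + h_q − h_p, ρ_in(−h_q) f_q)_q ) = ρ_out(−h_p) · F( f_p; (θ_q, g_q, f_q)_q ). -/
/-!
Each transported message `K(θ_q) ρ_in(g_q) f_q`, for a steerable kernel `K` with output
representation `ρ'`, is multiplied by `ρ'(-h_p)` under the gauge change: the factors of `ρ_in`
at `h_q` cancel, and those at `h_p` cancel against the kernel constraint
(`steerable_message`). Keys and the query are therefore both rotated by `ρ_att(-h_p)`, which is
orthogonal, so the attention logits, hence the softmax weights, are gauge invariant
(`OrthRep.dotProduct_mulVec`). The values are rotated by `ρ_out(-h_p)`, which comes out of the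
weighted sum by linearity.
-/

noncomputable section
open scoped BigOperators
open Matrix

/-- An orthogonal representation of `SO(2)` on `ℝ^C`, given by a map
`ρ : ℝ → M_C(ℝ)` with `ρ(0) = I`, `ρ(a+b) = ρ(a)ρ(b)`, `ρ(g + 2π) = ρ(g)` and
`ρ(g)ᵀ = ρ(−g)`. -/
structure OrthRep (C : ℕ) where
  ρ : ℝ → Matrix (Fin C) (Fin C) ℝ
  map_zero : ρ 0 = 1
  map_add : ∀ a b : ℝ, ρ (a + b) = ρ a * ρ b
  periodic : ∀ g : ℝ, ρ (g + 2 * Real.pi) = ρ g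
  transpose_eq : ∀ g : ℝ, (ρ g)ᵀ = ρ (-g)

/-- Softmax of a finite family of reals. -/
def softmax {N : ℕ} (z : Fin N → ℝ) (q : Fin N) : ℝ :=
  Real.exp (z q) / ∑ q', Real.exp (z q')

/-- The Equivariant Mesh Attention convolutional update
`F(f_p; (θ_q, g_q, f_q)_q) = N · Σ_q α_q · K_value(θ_q) ρ_in(g_q) f_q`,
where `α_q = softmax_q ⟨K_key(θ_q) ρ_in(g_q) f_q, K_query f_p⟩ / √C_att`. -/
def attnUpdate {Cin Catt Cout N : ℕ}
    (ρin : ℝ → Matrix (Fin Cin) (Fin Cin) ℝ)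
    (Kquery : Matrix (Fin Catt) (Fin Cin) ℝ)
    (Kkey : ℝ → Matrix (Fin Catt) (Fin Cin) ℝ)
    (Kvalue : ℝ → Matrix (Fin Cout) (Fin Cin) ℝ)
    (fp : Fin Cin → ℝ) (θ g : Fin N → ℝ) (f : Fin N → Fin Cin → ℝ) :
    Fin Cout → ℝ :=
  (N : ℝ) • ∑ q, softmax
      (fun q' => ((Kkey (θ q')).mulVec ((ρin (g q')).mulVec (f q')) ⬝ᵥ Kquery.mulVec fp)
        / Real.sqrt Catt) q •
    (Kvalue (θ q)).mulVec ((ρin (g q)).mulVec (f q))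

theorem OrthRep.neg_mul_self {C : ℕ} (r : OrthRep C) (a : ℝ) : r.ρ (-a) * r.ρ a = 1 := by
  rw [← r.map_add, neg_add_cancel, r.map_zero]

theorem OrthRep.dotProduct_mulVec {C : ℕ} (r : OrthRep C) (a : ℝ) (v w : Fin C → ℝ) :
    (r.ρ a).mulVec v ⬝ᵥ (r.ρ a).mulVec w = v ⬝ᵥ w := by
  rw [Matrix.dotProduct_mulVec, Matrix.vecMul_mulVec, r.transpose_eq, ← Matrix.dotProduct_mulVec,
    r.neg_mul_self, Matrix.one_mulVec]

/-- The message sent along an edge by a steerable kernel transforms under a gauge change by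
`h` at the receiver and `k` at the sender through the output representation at `-h` alone. -/
theorem steerable_message {Cin C : ℕ} (ρin : OrthRep Cin) (r : OrthRep C)
    (K : ℝ → Matrix (Fin C) (Fin Cin) ℝ)
    (hK : ∀ θ g : ℝ, K (θ - g) = r.ρ (-g) * K θ * ρin.ρ g)
    (θ g h k : ℝ) (v : Fin Cin → ℝ) :
    (K (θ - h)).mulVec ((ρin.ρ (g + k - h)).mulVec ((ρin.ρ (-k)).mulVec v)) =
      (r.ρ (-h)).mulVec ((K θ).mulVec ((ρin.ρ g).mulVec v)) := by
  have hg : ρin.ρ h * (ρin.ρ (g + k - h) * ρin.ρ (-k)) = ρin.ρ g := by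
    rw [← ρin.map_add, ← ρin.map_add]
    congr 1
    ring
  simp only [Matrix.mulVec_mulVec]
  rw [hK, ← hg]
  simp only [Matrix.mul_assoc]

/-- Lemma 2: gauge equivariance of the Equivariant Mesh Attention
update. -/
theorem attnUpdate_gauge_equivariant
    {Cin Catt Cout : ℕ} (hCin : 0 < Cin) (hCatt : 0 < Catt) (hCout : 0 < Cout)
    (ρin : OrthRep Cin) (ρatt : OrthRep Catt) (ρout : OrthRep Cout)
    (Kquery : Matrix (Fin Catt) (Fin Cin) ℝ)
    (Kkey : ℝ → Matrix (Fin Catt) (Fin Cin) ℝ)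
    (Kvalue : ℝ → Matrix (Fin Cout) (Fin Cin) ℝ)
    (hKquery : ∀ g : ℝ, Kquery = ρatt.ρ (-g) * Kquery * ρin.ρ g)
    (hKkey : ∀ θ g : ℝ, Kkey (θ - g) = ρatt.ρ (-g) * Kkey θ * ρin.ρ g)
    (hKvalue : ∀ θ g : ℝ, Kvalue (θ - g) = ρout.ρ (-g) * Kvalue θ * ρin.ρ g)
    {N : ℕ} (hN : 1 ≤ N)
    (θ g : Fin N → ℝ) (f : Fin N → Fin Cin → ℝ) (fp : Fin Cin → ℝ)
    (hp : ℝ) (hq : Fin N → ℝ) :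
    attnUpdate ρin.ρ Kquery Kkey Kvalue
        ((ρin.ρ (-hp)).mulVec fp)
        (fun q => θ q - hp)
        (fun q => g q + hq q - hp)
        (fun q => (ρin.ρ (-(hq q))).mulVec (f q)) =
      (ρout.ρ (-hp)).mulVec (attnUpdate ρin.ρ Kquery Kkey Kvalue fp θ g f) := by
  have hquery : Kquery.mulVec ((ρin.ρ (-hp)).mulVec fp) =
      (ρatt.ρ (-hp)).mulVec (Kquery.mulVec fp) := by
    have hcomm : Kquery * ρin.ρ (-hp) = ρatt.ρ (-hp) * Kquery := by
      have hcancel : ρin.ρ hp * ρin.ρ (-hp) = 1 := by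
        simpa using ρin.neg_mul_self (-hp)
      conv_lhs => rw [hKquery hp]
      rw [Matrix.mul_assoc, hcancel, Matrix.mul_one]
    rw [Matrix.mulVec_mulVec, hcomm, Matrix.mulVec_mulVec]
  simp only [attnUpdate, hquery, steerable_message ρin ρatt Kkey hKkey,
    steerable_message ρin ρout Kvalue hKvalue, OrthRep.dotProduct_mulVec,
    Matrix.mulVec_smul, Matrix.mulVec_sum]
end
end

section
/- (Gauge equivariance of the GEM-CNN convolutional update.) Let C_in, C_out be positive integers and let ρ_in, ρ_out be orthogonal representations of SO(2) on ℝ^{C_in} and ℝ^{C_out}. Let K_self be a C_out × C_in real matrix and K_neigh : ℝ → M_{C_out × C_in}(ℝ) satisfy, for all θ, g ∈ ℝ: K_self = ρ_out(−g) K_self ρ_in(g) and K_neigh(θ − g) = ρ_out(−g) K_neigh(θ) ρ_in(g). For an integer N ≥ 1, angles θ_q, g_q ∈ ℝ and vectors f_q ∈ ℝ^{C_in} for q = 1, …, N, and f_p ∈ ℝ^{C_in}, define G(f_p; (θ_q, g_q, f_q)_q) := K_self f_p + Σ_q K_neigh(θ_q) ρ_in(g_q) f_q. Then for all gauge changes h_p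 ∈ ℝ at p and h_q ∈ ℝ at each neighbor q: G( ρ_in(−h_p) f_p; (θ_q − h_p, g_q + h_q − h_p, ρ_in(−h_q) f_q)_q ) = ρ_out(−h_p) · G( f_p; (θ_q, g_q, f_q)_q ). -/
/-!
The claim holds summand by summand. The kernel constraint says that `K_self` intertwines `ρ_in` and
`ρ_out`, so the self term picks up `ρ_out(-h_p)` on the left. For a neighbour, the constraint on
`K_neigh` produces `ρ_out(-h_p)` on the left and `ρ_in(h_p)` on the right; the latter combines with
the transformed transport and feature, since `h_p + (g_q + h_q - h_p) - h_q = g_q`.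
-/

noncomputable section
open scoped BigOperators
open Matrix

/-- The GEM-CNN convolutional update
`G(f_p; (θ_q, g_q, f_q)_q) = K_self f_p + Σ_q K_neigh(θ_q) ρ_in(g_q) f_q`. -/
def gemUpdate {Cin Cout N : ℕ}
    (ρin : ℝ → Matrix (Fin Cin) (Fin Cin) ℝ)
    (Kself : Matrix (Fin Cout) (Fin Cin) ℝ)
    (Kneigh : ℝ → Matrix (Fin Cout) (Fin Cin) ℝ)
    (fp : Fin Cin → ℝ) (θ g : Fin N → ℝ) (f : Fin N → Fin Cin → ℝ) :
    Fin Cout → ℝ :=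
  Kself.mulVec fp + ∑ q, (Kneigh (θ q)).mulVec ((ρin (g q)).mulVec (f q))

/-- gauge equivariance of the GEM-CNN convolutional update. -/
theorem gemUpdate_gauge_equivariant
    {Cin Cout : ℕ} (hCin : 0 < Cin) (hCout : 0 < Cout)
    (ρin : OrthRep Cin) (ρout : OrthRep Cout)
    (Kself : Matrix (Fin Cout) (Fin Cin) ℝ)
    (Kneigh : ℝ → Matrix (Fin Cout) (Fin Cin) ℝ)
    (hKself : ∀ g : ℝ, Kself = ρout.ρ (-g) * Kself * ρin.ρ g)
    (hKneigh : ∀ θ g : ℝ, Kneigh (θ - g) = ρout.ρ (-g) * Kneigh θ * ρin.ρ g)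
    {N : ℕ} (hN : 1 ≤ N)
    (θ g : Fin N → ℝ) (f : Fin N → Fin Cin → ℝ) (fp : Fin Cin → ℝ)
    (hp : ℝ) (hq : Fin N → ℝ) :
    gemUpdate ρin.ρ Kself Kneigh
        ((ρin.ρ (-hp)).mulVec fp)
        (fun q => θ q - hp)
        (fun q => g q + hq q - hp)
        (fun q => (ρin.ρ (-(hq q))).mulVec (f q)) =
      (ρout.ρ (-hp)).mulVec (gemUpdate ρin.ρ Kself Kneigh fp θ g f) := by
  have h0 : ρin.ρ hp * ρin.ρ (-hp) = 1 := by
    rw [← ρin.map_add, add_neg_cancel, ρin.map_zero]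
  have hself : Kself * ρin.ρ (-hp) = ρout.ρ (-hp) * Kself := by
    conv_lhs => rw [hKself hp]
    rw [Matrix.mul_assoc, h0, Matrix.mul_one]
  have hneigh : ∀ q, Kneigh (θ q - hp) * (ρin.ρ (g q + hq q - hp) * ρin.ρ (-(hq q)))
      = ρout.ρ (-hp) * (Kneigh (θ q) * ρin.ρ (g q)) := by
    intro q
    rw [hKneigh, ← ρin.map_add, Matrix.mul_assoc, ← ρin.map_add, Matrix.mul_assoc]
    -- what remains is `hp + (g q + hq q - hp + -hq q) = g q`
    congr 3
    ring
  simp only [gemUpdate, Matrix.mulVec_add, Matrix.mulVec_sum, Matrix.mulVec_mulVec,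
    hself, hneigh]
end
end

section
/- (Gauge equivariance of multi-head Equivariant Mesh Attention.) Let C_att, C_out, h, d be positive integers with C_out = d·h, let ρ_att, ρ_out be orthogonal representations of SO(2) on ℝ^{C_att} and ℝ^{C_out}, and for each i = 1, …, h let ρ_i be an orthogonal representation of SO(2) on ℝ^d. For each i, let W_query^i, W_key^i be d × C_att real matrices and W_value^i a d × C_out real matrix satisfying, for all g ∈ ℝ: W_query^i = ρ_i(−g) W_query^i ρ_att(g), W_key^i = ρ_i(−g) W_key^i ρ_att(g), W_value^i = ρ_i(−g) W_value^i ρ_out(g); and let W^O be a C_out × C_out real matrix satisfying W^O = ρ_out(−g) W^O ρ_diag(g) for all g, where ρ_diag(g) is the block-diagonal matrix with blocks ρ_1(g), …, ρ_h(g). Given an integer N ≥ 1, a query Q ∈ ℝ^{C_att}, keys K_q ∈ ℝ^{C_att} and values V_q ∈ ℝ^{C_out} for q = 1, …, N, define head_i := N · Σ_q β_q^i W_value^i V_q with (β_q^i)_q := softmax over q of ⟨W_key^i K_q, W_query^i Q⟩ / √d, and MultiHead(Q, (K_q), (V_q)) := W^O · Concat(head_1, …, head_h) ∈ ℝ^{C_out}.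 Then for every g ∈ ℝ: MultiHead( ρ_att(−g) Q, (ρ_att(−g) K_q)_q, (ρ_out(−g) V_q)_q ) = ρ_out(−g) · MultiHead( Q, (K_q)_q, (V_q)_q ). -/
/-!
A constraint `W = σ(-g) W ρ(g)` for all `g` says that `W` intertwines `ρ` and `σ`
(`intertwine`). Hence a gauge change multiplies the queries, keys and values of head `i` by
`ρ_i(-g)`. This matrix is orthogonal, so the attention logits, and with them the softmax weights, do
not change (`dotProduct_mulVec_rho`), and each head is multiplied by `ρ_i(-g)`. Blockwise
multiplication of a concatenation is multiplication by the block-diagonal matrix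
(`blockDiagRep_mulVec_concatVec`), which `W^O` intertwines with `ρ_out`.
-/

noncomputable section
open scoped BigOperators
open Matrix

/-- Concatenation (stacking) of `h` vectors of `ℝ^d` into a vector of `ℝ^{d·h}`. -/
def concatVec {d h : ℕ} (v : Fin h → Fin d → ℝ) : Fin (d * h) → ℝ :=
  fun k => v (Fin.cast (mul_comm d h) k).divNat (Fin.cast (mul_comm d h) k).modNat

/-- Block-diagonal matrix with `h` diagonal blocks of size `d × d`. -/
def blockDiagRep {d h : ℕ} (M : Fin h → Matrix (Fin d) (Fin d) ℝ) :
    Matrix (Fin (d * h)) (Fin (d * h)) ℝ :=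
  fun k l =>
    if (Fin.cast (mul_comm d h) k).divNat = (Fin.cast (mul_comm d h) l).divNat then
      M (Fin.cast (mul_comm d h) k).divNat
        (Fin.cast (mul_comm d h) k).modNat (Fin.cast (mul_comm d h) l).modNat
    else 0

/-- Multi-head Equivariant Mesh Attention:
`MultiHead(Q, (K_q), (V_q)) = W^O · Concat(head_1, …, head_h)`, where
`head_i = N · Σ_q β_q^i W_value^i V_q` and
`β^i = softmax_q ⟨W_key^i K_q, W_query^i Q⟩ / √d`. -/
def multiHead {Catt d h N : ℕ}
    (Wquery Wkey : Fin h → Matrix (Fin d) (Fin Catt) ℝ)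
    (Wvalue : Fin h → Matrix (Fin d) (Fin (d * h)) ℝ)
    (WO : Matrix (Fin (d * h)) (Fin (d * h)) ℝ)
    (Q : Fin Catt → ℝ) (K : Fin N → Fin Catt → ℝ) (V : Fin N → Fin (d * h) → ℝ) :
    Fin (d * h) → ℝ :=
  WO.mulVec (concatVec (fun i =>
    (N : ℝ) • ∑ q, softmax
        (fun q' => ((Wkey i).mulVec (K q') ⬝ᵥ (Wquery i).mulVec Q) / Real.sqrt d) q •
      (Wvalue i).mulVec (V q)))

theorem OrthRep.rho_mul_rho_neg {C : ℕ} (r : OrthRep C) (g : ℝ) : r.ρ g * r.ρ (-g) = 1 := by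
  rw [← r.map_add, add_neg_cancel, r.map_zero]

theorem OrthRep.rho_neg_mul_rho {C : ℕ} (r : OrthRep C) (g : ℝ) : r.ρ (-g) * r.ρ g = 1 := by
  rw [← r.map_add, neg_add_cancel, r.map_zero]

theorem intertwine {m n : ℕ} (σ : OrthRep m) (ρ : OrthRep n) (W : Matrix (Fin m) (Fin n) ℝ)
    (hW : ∀ g : ℝ, W = σ.ρ (-g) * W * ρ.ρ g) (g : ℝ) (v : Fin n → ℝ) :
    W *ᵥ (ρ.ρ (-g) *ᵥ v) = σ.ρ (-g) *ᵥ (W *ᵥ v) := by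
  have h : W * ρ.ρ (-g) = σ.ρ (-g) * W := by
    conv_lhs => rw [hW g]
    rw [Matrix.mul_assoc, ρ.rho_mul_rho_neg, Matrix.mul_one]
  rw [Matrix.mulVec_mulVec, Matrix.mulVec_mulVec, h]

theorem dotProduct_mulVec_rho {C : ℕ} (r : OrthRep C) (g : ℝ) (v w : Fin C → ℝ) :
    (r.ρ g *ᵥ v) ⬝ᵥ (r.ρ g *ᵥ w) = v ⬝ᵥ w := by
  rw [Matrix.dotProduct_mulVec, ← Matrix.mulVec_transpose, Matrix.mulVec_mulVec, r.transpose_eq,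
    r.rho_neg_mul_rho, Matrix.one_mulVec]

theorem blockDiagRep_mulVec_concatVec {d h : ℕ} (M : Fin h → Matrix (Fin d) (Fin d) ℝ)
    (v : Fin h → Fin d → ℝ) :
    blockDiagRep M *ᵥ concatVec v = concatVec (fun i => M i *ᵥ v i) := by
  funext k
  -- A position in `Fin (d * h)` is a pair (head, coordinate inside the head).
  let e : Fin (d * h) ≃ Fin h × Fin d := (finCongr (mul_comm d h)).trans finProdFinEquiv.symm
  change ∑ l, (if (e k).1 = (e l).1 then M (e k).1 (e k).2 (e l).2 else 0) * v (e l).1 (e l).2 =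
    ∑ j, M (e k).1 (e k).2 j * v (e k).1 j
  rw [e.sum_comp (fun p => (if (e k).1 = p.1 then M (e k).1 (e k).2 p.2 else 0) * v p.1 p.2),
    Fintype.sum_prod_type, Finset.sum_comm]
  simp [ite_mul]

/-- gauge equivariance of multi-head Equivariant Mesh Attention
(with `C_out = d·h`). -/
theorem multiHead_gauge_equivariant
    {Catt d h : ℕ} (hCatt : 0 < Catt) (hd : 0 < d) (hh : 0 < h)
    (ρatt : OrthRep Catt) (ρout : OrthRep (d * h)) (ρi : Fin h → OrthRep d)
    (Wquery Wkey : Fin h → Matrix (Fin d) (Fin Catt) ℝ)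
    (Wvalue : Fin h → Matrix (Fin d) (Fin (d * h)) ℝ)
    (WO : Matrix (Fin (d * h)) (Fin (d * h)) ℝ)
    (hWquery : ∀ (i : Fin h) (g : ℝ), Wquery i = (ρi i).ρ (-g) * Wquery i * ρatt.ρ g)
    (hWkey : ∀ (i : Fin h) (g : ℝ), Wkey i = (ρi i).ρ (-g) * Wkey i * ρatt.ρ g)
    (hWvalue : ∀ (i : Fin h) (g : ℝ), Wvalue i = (ρi i).ρ (-g) * Wvalue i * ρout.ρ g)
    (hWO : ∀ g : ℝ, WO = ρout.ρ (-g) * WO * blockDiagRep (fun i => (ρi i).ρ g))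
    {N : ℕ} (hN : 1 ≤ N)
    (Q : Fin Catt → ℝ) (K : Fin N → Fin Catt → ℝ) (V : Fin N → Fin (d * h) → ℝ)
    (g : ℝ) :
    multiHead Wquery Wkey Wvalue WO
        ((ρatt.ρ (-g)).mulVec Q)
        (fun q => (ρatt.ρ (-g)).mulVec (K q))
        (fun q => (ρout.ρ (-g)).mulVec (V q)) =
      (ρout.ρ (-g)).mulVec (multiHead Wquery Wkey Wvalue WO Q K V) := by
  have hO : WO * blockDiagRep (fun i => (ρi i).ρ (-g)) = ρout.ρ (-g) * WO := by
    -- The constraint on `WO` at `-g` avoids multiplicativity of the block-diagonal matrix.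
    conv_rhs => rw [hWO (-g), neg_neg]
    rw [← Matrix.mul_assoc, ← Matrix.mul_assoc, ρout.rho_neg_mul_rho, Matrix.one_mul]
  unfold multiHead
  rw [Matrix.mulVec_mulVec, ← hO, ← Matrix.mulVec_mulVec, blockDiagRep_mulVec_concatVec]
  congr 2
  funext i
  simp only [intertwine _ _ _ (hWquery i), intertwine _ _ _ (hWkey i),
    intertwine _ _ _ (hWvalue i), dotProduct_mulVec_rho]
  rw [Matrix.mulVec_smul, Matrix.mulVec_sum]
  simp only [Matrix.mulVec_smul]
end
end

section
/- For all integers m, n ≥ 0 and every φ ∈ ℝ, the matrix-valued function K(θ) := Ref((m + n)θ + φ) satisfies the gauge-equivariance kernel constraint K(θ − g) = Rot(−m g) · K(θ) · Rot(n g) for all θ, g ∈ ℝ. In particular, taking φ = 0 and φ = π/2, the matrices ((c₊, s₊), (s₊, −c₊)) and ((−s₊, c₊), (c₊, s₊)) with c₊ = cos((m + n)θ) and s₊ = sin((m + n)θ) solve the gauge-equivariance constraint for kernels mapping features of type ρ_n to features of type ρ_m. -/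
/-!
Multiplying a reflection by a rotation only shifts its angle: `Rot a * Ref x = Ref (a + x)`
and `Ref x * Rot b = Ref (x - b)`. Hence multiplying `Ref ((m + n) θ + φ)` by `Rot (-m g)` on the
left and `Rot (n g)` on the right shifts the angle by `-(m + n) g`, which is the substitution
`θ ↦ θ - g`.
-/

noncomputable section
open Matrix Real

/-- The 2×2 rotation matrix of angle `α`. -/
def Rot (α : ℝ) : Matrix (Fin 2) (Fin 2) ℝ :=
  !![Real.cos α, -Real.sin α; Real.sin α, Real.cos α]

/-- The 2×2 reflection-type matrix of angle `α`. -/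
def Ref (α : ℝ) : Matrix (Fin 2) (Fin 2) ℝ :=
  !![Real.cos α, Real.sin α; Real.sin α, -Real.cos α]

theorem Rot_mul_Ref (a x : ℝ) : Rot a * Ref x = Ref (a + x) := by
  ext i j
  fin_cases i <;> fin_cases j <;>
    simp [Rot, Ref, Matrix.mul_apply, Fin.sum_univ_two, Real.cos_add, Real.sin_add] <;> ring

theorem Ref_mul_Rot (x b : ℝ) : Ref x * Rot b = Ref (x - b) := by
  ext i j
  fin_cases i <;> fin_cases j <;>
    simp [Rot, Ref, Matrix.mul_apply, Fin.sum_univ_two, Real.cos_sub, Real.sin_sub] <;> ring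

/-- The gauge constraint for an arbitrary phase `φ`; the two explicit kernels are the
cases `φ = 0` and `φ = π / 2`. -/
theorem Ref_gauge (m n φ θ g : ℝ) :
    Ref ((m + n) * (θ - g) + φ) = Rot (-m * g) * Ref ((m + n) * θ + φ) * Rot (n * g) := by
  rw [Rot_mul_Ref, Ref_mul_Rot]
  congr 1
  ring

/-- for all integers `m, n ≥ 0` and `φ ∈ ℝ`, the kernel
`K(θ) = Ref((m + n)θ + φ)` satisfies `K(θ − g) = Rot(−mg) K(θ) Rot(ng)`;
in particular `φ = 0` and `φ = π/2` give the two reflection-type solutions of the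
gauge-equivariance constraint from type `ρ_n` to type `ρ_m`. -/
theorem ref_kernel_solves_gauge_constraint (m n : ℕ) (φ : ℝ) :
    (∀ θ g : ℝ,
      Ref (((m : ℝ) + n) * (θ - g) + φ) =
        Rot (-(m : ℝ) * g) * Ref (((m : ℝ) + n) * θ + φ) * Rot ((n : ℝ) * g)) ∧
    (∀ θ g : ℝ,
      !![cos (((m : ℝ) + n) * (θ - g)), sin (((m : ℝ) + n) * (θ - g));
         sin (((m : ℝ) + n) * (θ - g)), -cos (((m : ℝ) + n) * (θ - g))] =
        Rot (-(m : ℝ) * g) *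
          !![cos (((m : ℝ) + n) * θ), sin (((m : ℝ) + n) * θ);
             sin (((m : ℝ) + n) * θ), -cos (((m : ℝ) + n) * θ)] *
          Rot ((n : ℝ) * g)) ∧
    (∀ θ g : ℝ,
      !![-sin (((m : ℝ) + n) * (θ - g)), cos (((m : ℝ) + n) * (θ - g));
         cos (((m : ℝ) + n) * (θ - g)), sin (((m : ℝ) + n) * (θ - g))] =
        Rot (-(m : ℝ) * g) *
          !![-sin (((m : ℝ) + n) * θ), cos (((m : ℝ) + n) * θ);
             cos (((m : ℝ) + n) * θ), sin (((m : ℝ) + n) * θ)] *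
          Rot ((n : ℝ) * g)) := by
  refine ⟨Ref_gauge m n φ, fun θ g => ?_, fun θ g => ?_⟩
  · simpa only [Ref, add_zero] using Ref_gauge m n 0 θ g
  · simpa only [Ref, Real.cos_add_pi_div_two, Real.sin_add_pi_div_two, neg_neg] using
      Ref_gauge m n (π / 2) θ g
end
end
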